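/- (Theorem 1, part (i), existence) Suppose (g_n^*) is an optimal configuration with overall channel h^* ≠ 0, and let n be an element with v_n ≠ 0. If i is an index such that ang(h^*, F_{n,i}) ≤ ang(h^*, F_{n,l}) for every l ∈ {1,…,K} and ang(h^*, F_{n,i}) < π/2, then g_n^* = F_{n,i}. -/

import Mathlib

/-- The angle in `[0,π]` between two nonzero complex numbers regarded as plane vectors:
`ang a b = arccos (Re (a * conj b) / (|a| * |b|))`. -/
noncomputable def ang (a b : ℂ) : ℝ :=
  Real.arccos ((a * (starRingEnd ℂ) b).re / (‖a‖ * ‖b‖))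

/-!
If a vector `d` satisfies `0 ≤ ⟪h, d⟫`, then `‖h + d‖ ^ 2 ≥ ‖h‖ ^ 2 + ‖d‖ ^ 2`. Take for `h` the
overall channel of an optimal configuration and for `d` the change `x - g n` caused by switching
element `n` to another admissible value `x`: optimality forces `d = 0` as soon as
`⟪h, g n⟫ ≤ ⟪h, x⟫`. A value of element `n` that has both maximal norm and minimal angle to `h` has
the largest inner product with `h`, provided that angle is not obtuse.
-/

open InnerProductGeometry RealInnerProductSpace

lemma ang_eq_angle (a b : ℂ) : ang a b = angle a b := by
  rw [ang, angle, real_inner_comm, Complex.inner, mul_comm a]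

lemma sum_update_eq_sum_add_sub {ι M : Type*} [Fintype ι] [DecidableEq ι] [AddCommGroup M]
    (g : ι → M) (n : ι) (x : M) : ∑ m, Function.update g n x m = ∑ m, g m + (x - g n) := by
  rw [Finset.sum_update_of_mem (Finset.mem_univ n), Finset.sdiff_singleton_eq_erase,
    ← Finset.add_sum_erase _ g (Finset.mem_univ n)]
  abel

section Exchange

variable {E : Type*} [NormedAddCommGroup E] [InnerProductSpace ℝ E]

lemma cos_angle_nonneg_of_angle_le_pi_div_two {x y : E} (hxy : angle x y ≤ Real.pi / 2) :
    0 ≤ Real.cos (angle x y) :=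
  Real.cos_nonneg_of_neg_pi_div_two_le_of_le (by linarith [Real.pi_pos, angle_nonneg x y]) hxy

lemma inner_nonneg_of_angle_le_pi_div_two {x y : E} (hxy : angle x y ≤ Real.pi / 2) :
    0 ≤ ⟪x, y⟫ := by
  rw [← cos_angle_mul_norm_mul_norm]
  exact mul_nonneg (cos_angle_nonneg_of_angle_le_pi_div_two hxy) (by positivity)

lemma inner_le_inner_of_angle_le_of_norm_le {h x y : E} (hangle : angle h x ≤ angle h y)
    (hnorm : ‖y‖ ≤ ‖x‖) (hx : angle h x ≤ Real.pi / 2) : ⟪h, y⟫ ≤ ⟪h, x⟫ := by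
  have hcos : Real.cos (angle h y) ≤ Real.cos (angle h x) :=
    Real.cos_le_cos_of_nonneg_of_le_pi (angle_nonneg h x) (angle_le_pi h y) hangle
  have hcos_nonneg : 0 ≤ Real.cos (angle h x) := cos_angle_nonneg_of_angle_le_pi_div_two hx
  calc ⟪h, y⟫ = Real.cos (angle h y) * (‖h‖ * ‖y‖) := (cos_angle_mul_norm_mul_norm h y).symm
    _ ≤ Real.cos (angle h x) * (‖h‖ * ‖x‖) := by gcongr
    _ = ⟪h, x⟫ := cos_angle_mul_norm_mul_norm h x

lemma eq_zero_of_norm_add_le_of_inner_nonneg {h d : E} (hle : ‖h + d‖ ≤ ‖h‖)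
    (hinner : 0 ≤ ⟪h, d⟫) : d = 0 := by
  have hsq : ‖h + d‖ ^ 2 ≤ ‖h‖ ^ 2 := by gcongr
  rw [norm_add_sq_real] at hsq
  exact norm_eq_zero.mp (sq_eq_zero_iff.mp (by linarith [sq_nonneg ‖d‖]))

variable {ι : Type*} [Fintype ι]

lemma eq_of_isMaxOn_norm_add_sum_of_inner_le {S : ι → Set E} {c : E} {g : ι → E}
    (hg : g ∈ Set.univ.pi S) (hmax : IsMaxOn (fun g ↦ ‖c + ∑ m, g m‖) (Set.univ.pi S) g)
    {n : ι} {x : E} (hx : x ∈ S n) (hinner : ⟪c + ∑ m, g m, g n⟫ ≤ ⟪c + ∑ m, g m, x⟫) :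
    g n = x := by
  classical
  have hswap : ‖c + ∑ m, Function.update g n x m‖ ≤ ‖c + ∑ m, g m‖ :=
    hmax ((Set.update_mem_pi_iff_of_mem hg).mpr fun _ ↦ hx)
  rw [sum_update_eq_sum_add_sub, ← add_assoc] at hswap
  have hinner_sub : 0 ≤ ⟪c + ∑ m, g m, x - g n⟫ := by
    rwa [inner_sub_right, sub_nonneg]
  exact (sub_eq_zero.mp (eq_zero_of_norm_add_le_of_inner_nonneg hswap hinner_sub)).symm

theorem stmt_5_general {κ : Type*} (h_d : E) (F : ι → κ → E) (g : ι → E)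
    (hg : ∀ m, g m = 0 ∨ ∃ i, g m = F m i)
    (hopt : ∀ g' : ι → E, (∀ m, g' m = 0 ∨ ∃ i, g' m = F m i) →
      ‖h_d + ∑ m, g' m‖ ≤ ‖h_d + ∑ m, g m‖)
    (n : ι) (i : κ) (hnorm : ∀ l, ‖F n l‖ ≤ ‖F n i‖)
    (hmin : ∀ l, angle (h_d + ∑ m, g m) (F n i) ≤ angle (h_d + ∑ m, g m) (F n l))
    (hang : angle (h_d + ∑ m, g m) (F n i) ≤ Real.pi / 2) :
    g n = F n i := by
  let S (m : ι) : Set E := {z | z = 0 ∨ ∃ l, z = F m l}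
  have hmax : IsMaxOn (fun g ↦ ‖h_d + ∑ m, g m‖) (Set.univ.pi S) g :=
    fun g' hg' ↦ hopt g' fun m ↦ hg' m (Set.mem_univ m)
  have hinner : ⟪h_d + ∑ m, g m, g n⟫ ≤ ⟪h_d + ∑ m, g m, F n i⟫ := by
    rcases hg n with hzero | ⟨l, hl⟩
    · rw [hzero, inner_zero_right]
      exact inner_nonneg_of_angle_le_pi_div_two hang
    · rw [hl]
      exact inner_le_inner_of_angle_le_of_norm_le (hmin l) (hnorm l) hang
  exact eq_of_isMaxOn_norm_add_sum_of_inner_le (S := S) (fun m _ ↦ hg m) hmax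
    (Or.inr ⟨i, rfl⟩) hinner

end Exchange

/-- Theorem 1 part (i), existence: if `F n i` has the smallest angle with `h^*` among
`F n 1, …, F n K` and that angle is `< π/2`, then `g n = F n i` in the optimal configuration. -/
theorem stmt_5
    {N K : ℕ} (hN : 0 < N) (hK : 0 < K)
    (h_d : ℂ) (v : Fin N → ℂ) (φ : Fin K → ℝ)
    (hφinj : Function.Injective φ)
    (hφrange : ∀ i, 0 ≤ φ i ∧ φ i < 2 * Real.pi)
    (F : Fin N → Fin K → ℂ)
    (hF : ∀ m i, F m i = v m * Complex.exp ((φ i : ℂ) * Complex.I))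
    (g : Fin N → ℂ)
    (hg : ∀ m, g m = 0 ∨ ∃ i, g m = F m i)
    (hopt : ∀ g' : Fin N → ℂ, (∀ m, g' m = 0 ∨ ∃ i, g' m = F m i) →
      ‖h_d + ∑ m, g' m‖ ≤ ‖h_d + ∑ m, g m‖)
    (hstar : h_d + ∑ m, g m ≠ 0)
    (n : Fin N) (hvn : v n ≠ 0)
    (i : Fin K)
    (hmin : ∀ l, ang (h_d + ∑ m, g m) (F n i) ≤ ang (h_d + ∑ m, g m) (F n l))
    (hang : ang (h_d + ∑ m, g m) (F n i) < Real.pi / 2) :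
    g n = F n i := by
  simp only [ang_eq_angle] at hmin hang
  exact stmt_5_general h_d F g hg hopt n i (fun l ↦ by simp [hF])
    hmin hang.le
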